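/- (Separation-of-variables structure of the entry Ĉ.) Let Ĉ(z) be the (2,1) entry of the N-site reflection monodromy matrix T̂(z). Then there exists a unique polynomial c ∈ R[X] of degree at most N − 1 such that Ĉ(z) = (z² − z⁻²)·c(z² + z⁻²) in R[z,z⁻¹], and the coefficient of X^{N−1} in c equals Q = Σ_{j=1}^{N} f_j·( ξ(k_j/a_j)·Π_{i>j} k_i² − ξ⁻¹(a_j/k_j)·Π_{i>j} k_i⁻² ). -/

import Mathlib

open LaurentPolynomial

noncomputable section

/-- The local Lax matrix `L(u) = [[u k − u⁻¹ k⁻¹, e], [f, u k⁻¹ − u⁻¹ k]]` of the XXZ chain,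
as a 2×2 matrix over the Laurent polynomial ring `R[z,z⁻¹]`; the argument `v` stands for the
inverse `u⁻¹` of the unit `u`. -/
noncomputable def lax {R : Type} [CommRing R] (e f k kinv : R)
    (u v : LaurentPolynomial R) : Matrix (Fin 2) (Fin 2) (LaurentPolynomial R) :=
  !![u * C k - v * C kinv, C e; C f, u * C kinv - v * C k]

/-- The diagonal reflection matrix `K(z) = diag(ξz − ξ⁻¹z⁻¹, ξz⁻¹ − ξ⁻¹z)`, where `v` stands
for `z⁻¹`. -/
noncomputable def refK {R : Type} [CommRing R] [Algebra ℂ R] (ξ : ℂ)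
    (u v : LaurentPolynomial R) : Matrix (Fin 2) (Fin 2) (LaurentPolynomial R) :=
  !![algebraMap ℂ (LaurentPolynomial R) ξ * u - algebraMap ℂ (LaurentPolynomial R) ξ⁻¹ * v, 0;
     0, algebraMap ℂ (LaurentPolynomial R) ξ * v - algebraMap ℂ (LaurentPolynomial R) ξ⁻¹ * u]

/-- The reflection monodromy matrix
`T̂(z) = L₁(a₁z)⋯L_N(a_N z)·K(z)·L_N(z/a_N)⋯L₁(z/a₁)`, evaluated at a general unit `u`
(with `v` standing for `u⁻¹`). -/
noncomputable def thatGen {R : Type} [CommRing R] [Algebra ℂ R] (N : ℕ)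
    (e f k kinv : Fin N → R) (ξ : ℂ) (a : Fin N → ℂ) (u v : LaurentPolynomial R) :
    Matrix (Fin 2) (Fin 2) (LaurentPolynomial R) :=
  (List.ofFn fun i => lax (e i) (f i) (k i) (kinv i)
      (algebraMap ℂ (LaurentPolynomial R) (a i) * u)
      (algebraMap ℂ (LaurentPolynomial R) (a i)⁻¹ * v)).prod
  * refK ξ u v *
  ((List.ofFn fun i => lax (e i) (f i) (k i) (kinv i)
      (algebraMap ℂ (LaurentPolynomial R) (a i)⁻¹ * u)
      (algebraMap ℂ (LaurentPolynomial R) (a i) * v)).reverse).prod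

/-- The reflection monodromy matrix `T̂(z)` at `u = z`. -/
noncomputable def That {R : Type} [CommRing R] [Algebra ℂ R] (N : ℕ)
    (e f k kinv : Fin N → R) (ξ : ℂ) (a : Fin N → ℂ) :
    Matrix (Fin 2) (Fin 2) (LaurentPolynomial R) :=
  thatGen N e f k kinv ξ a (T 1) (T (-1))

/-- The leading coefficient `Q = Σ_j f_j·(ξ(k_j/a_j)·Π_{i>j} k_i² − ξ⁻¹(a_j/k_j)·Π_{i>j} k_i⁻²)`
of Sklyanin's separated polynomial `C̃(λ)`. -/
noncomputable def Qlead {R : Type} [CommRing R] [Algebra ℂ R] (N : ℕ)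
    (f k kinv : Fin N → R) (ξ : ℂ) (a : Fin N → ℂ) : R :=
  ∑ j : Fin N, f j *
    (algebraMap ℂ R ξ * (k j * algebraMap ℂ R (a j)⁻¹)
        * ∏ i ∈ Finset.univ.filter (fun i => j < i), (k i) ^ 2
      - algebraMap ℂ R ξ⁻¹ * (algebraMap ℂ R (a j) * kinv j)
        * ∏ i ∈ Finset.univ.filter (fun i => j < i), (kinv i) ^ 2)

/-!
Since `adj L(u) = -L(u⁻¹)` and `adj K(z) = K(z⁻¹)`, the monodromy matrix satisfies
`adj T̂(z) = T̂(z⁻¹)`; hence `Ĉ(z⁻¹) = -Ĉ(z)`. Moreover `Ĉ` only contains even powers of `z`, so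
stripping off top coefficients one at a time writes it as `(z² - z⁻²) c(z² + z⁻²)`. The degree of
`c` and its top coefficient are read off from the leading term of `Ĉ`, which is an entry of a
product of lower triangular matrices: the leading parts of the Lax matrices once their entries are
graded suitably.
-/

section LeadingTerm

variable {R : Type*} [CommRing R] {d n m : ℤ} {g h : R[T;T⁻¹]} {r s : R}

/-- The Laurent polynomial `g` has leading term `r zⁿ` in steps of `d`, that is,
`g ∈ r zⁿ + zⁿ⁻ᵈ R[z⁻ᵈ]`. The coefficient `r` may vanish, so `n` only bounds the degree of `g`
(for `d > 0`); for `d = 2` the notion also records the parity of `g`. -/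
def HasLeadingTerm (d : ℤ) (g : R[T;T⁻¹]) (n : ℤ) (r : R) : Prop :=
  ∃ p : Polynomial R, p.coeff 0 = r ∧ g = T n * Polynomial.aeval (T (-d)) p

theorem hasLeadingTerm_zero : HasLeadingTerm d (0 : R[T;T⁻¹]) n 0 :=
  ⟨0, by simp, by simp⟩

theorem hasLeadingTerm_C_mul_T (r : R) : HasLeadingTerm d (C r * T n) n r :=
  ⟨Polynomial.C r, by simp, by rw [Polynomial.aeval_C, T_mul, C_eq_algebraMap]⟩

theorem hasLeadingTerm_C (r : R) : HasLeadingTerm d (C r) 0 r := by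
  simpa using hasLeadingTerm_C_mul_T (d := d) (n := 0) r

namespace HasLeadingTerm

theorem add (hg : HasLeadingTerm d g n r) (hh : HasLeadingTerm d h n s) :
    HasLeadingTerm d (g + h) n (r + s) := by
  obtain ⟨p, rfl, rfl⟩ := hg
  obtain ⟨q, rfl, rfl⟩ := hh
  exact ⟨p + q, by simp, by rw [map_add, mul_add]⟩

theorem sub (hg : HasLeadingTerm d g n r) (hh : HasLeadingTerm d h n s) :
    HasLeadingTerm d (g - h) n (r - s) := by
  obtain ⟨p, rfl, rfl⟩ := hg
  obtain ⟨q, rfl, rfl⟩ := hh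
  exact ⟨p - q, by simp, by rw [map_sub, mul_sub]⟩

theorem mul (hg : HasLeadingTerm d g n r) (hh : HasLeadingTerm d h m s) :
    HasLeadingTerm d (g * h) (n + m) (r * s) := by
  obtain ⟨p, rfl, rfl⟩ := hg
  obtain ⟨q, rfl, rfl⟩ := hh
  exact ⟨p * q, Polynomial.mul_coeff_zero p q, by rw [map_mul, T_add, mul_mul_mul_comm]⟩

theorem sum {ι : Type*} {t : Finset ι} {g : ι → R[T;T⁻¹]} {r : ι → R}
    (hg : ∀ i ∈ t, HasLeadingTerm d (g i) n (r i)) :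
    HasLeadingTerm d (∑ i ∈ t, g i) n (∑ i ∈ t, r i) := by
  induction t using Finset.cons_induction with
  | empty => simpa using hasLeadingTerm_zero
  | cons i t hi ih =>
    rw [Finset.forall_mem_cons] at hg
    simpa using hg.1.add (ih hg.2)

theorem add_mul_natCast (hg : HasLeadingTerm d g n r) {k : ℕ} (hk : k ≠ 0) :
    HasLeadingTerm d g (n + d * k) 0 := by
  obtain ⟨p, rfl, rfl⟩ := hg
  refine ⟨p * Polynomial.X ^ k, by simp [Polynomial.mul_coeff_zero, hk.symm], ?_⟩
  have hT : (T n : R[T;T⁻¹]) = T (n + d * k) * T (k * -d) := by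
    rw [← T_add]
    ring_nf
  rw [map_mul, map_pow, Polynomial.aeval_X, T_pow, hT]
  ring

theorem exists_of_coeff_zero (hg : HasLeadingTerm d g (n + d) 0) :
    ∃ r, HasLeadingTerm d g n r := by
  obtain ⟨p, hp, rfl⟩ := hg
  obtain ⟨q, rfl⟩ := Polynomial.X_dvd_iff.mpr hp
  refine ⟨q.coeff 0, q, rfl, ?_⟩
  rw [map_mul, Polynomial.aeval_X, ← mul_assoc, ← T_add, add_neg_cancel_right]

theorem coeff_of_le (hd : 0 < d) (hg : HasLeadingTerm d g n r) (hm : n ≤ m) :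
    g.coeff m = if m = n then r else 0 := by
  obtain ⟨p, rfl, rfl⟩ := hg
  induction p using Polynomial.induction_on' with
  | add p q hp hq =>
    rw [map_add, mul_add, AddMonoidAlgebra.coeff_add, Finsupp.add_apply, hp, hq,
      Polynomial.coeff_add]
    split_ifs <;> simp
  | monomial i a =>
    have hi : T n * Polynomial.aeval (T (-d)) (Polynomial.monomial i a) =
        .single (n - i * d) a := by
      rw [Polynomial.aeval_monomial, T_pow, ← C_eq_algebraMap, mul_left_comm, ← T_add,
        single_eq_C_mul_T]
      ring_nf
    rw [hi, AddMonoidAlgebra.coeff_single, Finsupp.single_apply, Polynomial.coeff_monomial]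
    rcases Nat.eq_zero_or_pos i with rfl | hi_pos
    · simp [eq_comm]
    · have : 0 < i * d := by positivity
      rw [if_neg (by lia), if_neg hi_pos.ne', ite_self]

theorem unique (hd : 0 < d) (hr : HasLeadingTerm d g n r) (hs : HasLeadingTerm d g n s) :
    r = s := by
  simpa using (hr.coeff_of_le hd le_rfl).symm.trans (hs.coeff_of_le hd le_rfl)

theorem eq_zero_of_invert_eq_neg [IsAddTorsionFree R] (hd : 0 < d)
    (hg : HasLeadingTerm d g 0 r) (hinv : invert g = -g) : g = 0 := by
  have hodd (m : ℤ) : g.coeff (-m) = -g.coeff m := by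
    simpa using congrArg (fun f : R[T;T⁻¹] ↦ f.coeff m) hinv
  have hpos {m : ℤ} (hm : 0 < m) : g.coeff m = 0 := by
    rw [hg.coeff_of_le hd hm.le, if_neg hm.ne']
  ext m
  rcases lt_trichotomy m 0 with hm | rfl | hm
  · simpa [hpos (neg_pos.mpr hm)] using hodd m
  · exact self_eq_neg.mp (hodd 0)
  · exact hpos hm

end HasLeadingTerm

theorem hasLeadingTerm_C_mul_T_add (r s : R) {k : ℕ} (hk : k ≠ 0) (hm : m + d * k = n) :
    HasLeadingTerm d (C r * T n + C s * T m) n r := by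
  subst hm
  simpa only [add_zero] using
    (hasLeadingTerm_C_mul_T r).add ((hasLeadingTerm_C_mul_T s).add_mul_natCast hk)

end LeadingTerm

section AntiInvariant

variable {R : Type*} [CommRing R] {d : ℤ}

theorem hasLeadingTerm_T_add_T_neg :
    HasLeadingTerm d (T d + T (-d) : R[T;T⁻¹]) d 1 := by
  simpa using hasLeadingTerm_C_mul_T_add (1 : R) 1 two_ne_zero (show -d + d * 2 = d by ring)

theorem hasLeadingTerm_T_sub_T_neg :
    HasLeadingTerm d (T d - T (-d) : R[T;T⁻¹]) d 1 := by
  simpa [← sub_eq_add_neg] using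
    hasLeadingTerm_C_mul_T_add (1 : R) (-1) two_ne_zero (show -d + d * 2 = d by ring)

theorem hasLeadingTerm_aeval_T_add_T_neg {n : ℕ} {c : Polynomial R} (hc : c.natDegree ≤ n) :
    HasLeadingTerm d (Polynomial.aeval (T d + T (-d) : R[T;T⁻¹]) c) (d * n) (c.coeff n) := by
  induction n generalizing c with
  | zero =>
    rw [Polynomial.eq_C_of_natDegree_le_zero hc]
    simpa using hasLeadingTerm_C (c.coeff 0)
  | succ n ih =>
    have hdiv : c.divX.natDegree ≤ n := by
      rw [Polynomial.natDegree_divX_eq_natDegree_tsub_one]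
      lia
    have hconst : HasLeadingTerm d (C (c.coeff 0)) (d * n + d) 0 := by
      simpa [mul_add] using (hasLeadingTerm_C (c.coeff 0)).add_mul_natCast n.succ_ne_zero
    rw [← c.divX_mul_X_add]
    simpa [mul_add] using ((ih hdiv).mul hasLeadingTerm_T_add_T_neg).add hconst

theorem hasLeadingTerm_T_sub_T_neg_mul_aeval {n : ℕ} {c : Polynomial R} (hc : c.natDegree ≤ n) :
    HasLeadingTerm d ((T d - T (-d)) * Polynomial.aeval (T d + T (-d) : R[T;T⁻¹]) c)
      (d * (n + 1 : ℕ)) (c.coeff n) := by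
  have h := hasLeadingTerm_T_sub_T_neg.mul (hasLeadingTerm_aeval_T_add_T_neg (d := d) hc)
  rw [one_mul] at h
  convert h using 1
  push_cast
  ring

theorem injective_T_sub_T_neg_mul_aeval (hd : 0 < d) :
    Function.Injective fun c : Polynomial R ↦
      (T d - T (-d)) * Polynomial.aeval (T d + T (-d) : R[T;T⁻¹]) c := by
  intro b c hbc
  rw [← sub_eq_zero, ← Polynomial.leadingCoeff_eq_zero]
  refine (hasLeadingTerm_T_sub_T_neg_mul_aeval (c := b - c) le_rfl).unique hd ?_
  rw [map_sub, mul_sub, sub_eq_zero.mpr hbc]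
  exact hasLeadingTerm_zero

theorem exists_eq_T_sub_T_neg_mul_aeval [IsAddTorsionFree R] (hd : 0 < d) {n : ℕ}
    {g : R[T;T⁻¹]} {r : R} (hg : HasLeadingTerm d g (d * n) r) (hinv : invert g = -g) :
    ∃ c : Polynomial R, c.degree < n ∧
      g = (T d - T (-d)) * Polynomial.aeval (T d + T (-d) : R[T;T⁻¹]) c := by
  induction n generalizing g r with
  | zero =>
    refine ⟨0, by simp, ?_⟩
    rw [map_zero, mul_zero]
    exact HasLeadingTerm.eq_zero_of_invert_eq_neg hd (by simpa using hg) hinv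
  | succ n ih =>
    let top : R[T;T⁻¹] :=
      (T d - T (-d)) * Polynomial.aeval (T d + T (-d)) (Polynomial.monomial n r)
    have htop : HasLeadingTerm d top (d * (n + 1 : ℕ)) r := by
      simpa only [Polynomial.coeff_monomial_same] using
        hasLeadingTerm_T_sub_T_neg_mul_aeval (Polynomial.natDegree_monomial_le (m := n) r)
    have htop_inv : invert top = -top := by
      simp only [top, map_mul, map_sub, invert_T, neg_neg, Polynomial.aeval_monomial,
        map_pow, map_add, AlgEquiv.commutes, add_comm (T (-d))]
      ring
    obtain ⟨s, hs⟩ : ∃ s, HasLeadingTerm d (g - top) (d * n) s := by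
      apply HasLeadingTerm.exists_of_coeff_zero
      simpa [mul_add] using hg.sub htop
    obtain ⟨c, hc, hgc⟩ := ih hs (by rw [map_sub, hinv, htop_inv]; ring)
    refine ⟨c + Polynomial.monomial n r, ?_, ?_⟩
    · rw [Polynomial.degree_lt_iff_coeff_zero] at hc ⊢
      intro m hm
      rw [Polynomial.coeff_add, hc m (by lia), Polynomial.coeff_monomial, if_neg (by lia), add_zero]
    · rw [map_add, mul_add, ← hgc, sub_add_cancel]

end AntiInvariant

section LeadingMatrix

variable {R ι : Type*} [CommRing R] [Fintype ι] {d n m : ℤ} {w : ι → ℤ}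

/-- The leading matrix of a matrix of Laurent polynomials for the grading in which the `(i, j)`
entry is shifted by `w j - w i`. The shift makes leading matrices multiplicative although
entries of different degrees are mixed. -/
def HasLeadingMatrix (d : ℤ) (w : ι → ℤ) (M : Matrix ι ι R[T;T⁻¹]) (n : ℤ) (A : Matrix ι ι R) :
    Prop :=
  ∀ i j, HasLeadingTerm d (M i j) (n + w j - w i) (A i j)

theorem HasLeadingMatrix.mul {M N : Matrix ι ι R[T;T⁻¹]} {A B : Matrix ι ι R}
    (hM : HasLeadingMatrix d w M m A) (hN : HasLeadingMatrix d w N n B) :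
    HasLeadingMatrix d w (M * N) (m + n) (A * B) := by
  intro i j
  refine HasLeadingTerm.sum fun l _ ↦ ?_
  convert (hM i l).mul (hN l j) using 1
  ring

end LeadingMatrix

section Monodromy

variable {R : Type} [CommRing R]

theorem adjugate_lax (e f k kinv : R) (u v : R[T;T⁻¹]) :
    (lax e f k kinv u v).adjugate = -lax e f k kinv v u := by
  simp [lax, Matrix.adjugate_fin_two_of]

theorem algHom_C (φ : R[T;T⁻¹] →ₐ[R] R[T;T⁻¹]) (r : R) : φ (C r) = C r :=
  φ.commutes r

theorem map_lax (φ : R[T;T⁻¹] →ₐ[R] R[T;T⁻¹]) (e f k kinv : R) (u v : R[T;T⁻¹]) :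
    φ.mapMatrix (lax e f k kinv u v) = lax e f k kinv (φ u) (φ v) := by
  ext1 i j
  fin_cases i <;> fin_cases j <;> simp [lax, algHom_C]

/-- The weights `(0, 1)` put the entry `e` below its degree bound, so that the leading matrix
is lower triangular. -/
theorem hasLeadingMatrix_lax (e f k kinv α β : R) :
    HasLeadingMatrix 2 ![0, 1] (lax e f k kinv (C α * T 1) (C β * T (-1))) 1
      !![α * k, 0; f, α * kinv] := by
  have hdiag (x y : R) :
      HasLeadingTerm 2 (C α * T 1 * C x - C β * T (-1) * C y) 1 (α * x) := by
    convert hasLeadingTerm_C_mul_T_add (d := 2) (n := 1) (m := -1) (α * x) (-(β * y)) one_ne_zero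
      (by norm_num) using 1
    simp only [map_neg, map_mul]
    ring
  intro i j
  fin_cases i <;> fin_cases j
  · simpa [lax] using hdiag k kinv
  · simpa [lax] using (hasLeadingTerm_C (d := 2) e).add_mul_natCast one_ne_zero
  · simpa [lax] using hasLeadingTerm_C f
  · simpa [lax] using hdiag kinv k

theorem leadingMatrix_dress {f k kinv p q s α β : R} (hα : α * β = 1) (hk : k * kinv = 1) :
    !![α * k, 0; f, α * kinv] * !![p, 0; q, s] * !![β * k, 0; f, β * kinv] =
      !![k ^ 2 * p, 0; f * (β * k * p + α * kinv * s) + q, kinv ^ 2 * s] := by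
  ext i j
  fin_cases i <;> fin_cases j <;>
    simp only [Matrix.mul_fin_two, Fin.zero_eta, Fin.mk_one, Matrix.of_apply, Matrix.cons_val]
  · linear_combination k ^ 2 * p * hα
  · ring
  · linear_combination k * kinv * q * hα + q * hk
  · linear_combination kinv ^ 2 * s * hα

variable [Algebra ℂ R]

theorem algebraMap_laurentPolynomial (x : ℂ) :
    algebraMap ℂ R[T;T⁻¹] x = C (algebraMap ℂ R x) :=
  IsScalarTower.algebraMap_apply ℂ R R[T;T⁻¹] x

theorem adjugate_refK (ξ : ℂ) (u v : R[T;T⁻¹]) : (refK ξ u v).adjugate = refK ξ v u := by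
  simp [refK, Matrix.adjugate_fin_two_of]

theorem map_refK (φ : R[T;T⁻¹] →ₐ[R] R[T;T⁻¹]) (ξ : ℂ) (u v : R[T;T⁻¹]) :
    φ.mapMatrix (refK ξ u v) = refK ξ (φ u) (φ v) := by
  ext1 i j
  fin_cases i <;> fin_cases j <;>
    simp [refK, algebraMap_laurentPolynomial, algHom_C]

theorem hasLeadingMatrix_refK (ξ : ℂ) :
    HasLeadingMatrix 2 ![0, 1] (refK ξ (T 1) (T (-1)) : Matrix _ _ R[T;T⁻¹]) 1
      !![algebraMap ℂ R ξ, 0; 0, -algebraMap ℂ R ξ⁻¹] := by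
  have hdiag (x y : R) : HasLeadingTerm 2 (C x * T 1 + C y * T (-1)) 1 x :=
    hasLeadingTerm_C_mul_T_add x y one_ne_zero (by norm_num)
  intro i j
  fin_cases i <;> fin_cases j
  · simpa [refK, algebraMap_laurentPolynomial, ← sub_eq_add_neg] using
      hdiag (algebraMap ℂ R ξ) (-algebraMap ℂ R ξ⁻¹)
  · simpa [refK] using hasLeadingTerm_zero
  · simpa [refK] using hasLeadingTerm_zero
  · simpa [refK, algebraMap_laurentPolynomial, neg_add_eq_sub] using
      hdiag (-algebraMap ℂ R ξ⁻¹) (algebraMap ℂ R ξ)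

theorem thatGen_zero (e f k kinv : Fin 0 → R) (ξ : ℂ) (a : Fin 0 → ℂ) (u v : R[T;T⁻¹]) :
    thatGen 0 e f k kinv ξ a u v = refK ξ u v := by
  simp [thatGen]

theorem thatGen_succ {N : ℕ} (e f k kinv : Fin (N + 1) → R) (ξ : ℂ) (a : Fin (N + 1) → ℂ)
    (u v : R[T;T⁻¹]) :
    thatGen (N + 1) e f k kinv ξ a u v =
      lax (e 0) (f 0) (k 0) (kinv 0) (algebraMap ℂ _ (a 0) * u) (algebraMap ℂ _ (a 0)⁻¹ * v)
      * thatGen N (Fin.tail e) (Fin.tail f) (Fin.tail k) (Fin.tail kinv) ξ (Fin.tail a) u v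
      * lax (e 0) (f 0) (k 0) (kinv 0) (algebraMap ℂ _ (a 0)⁻¹ * u)
        (algebraMap ℂ _ (a 0) * v) := by
  simp [thatGen, List.ofFn_succ, Fin.tail, mul_assoc]

theorem Qlead_succ {N : ℕ} (f k kinv : Fin (N + 1) → R) (ξ : ℂ) (a : Fin (N + 1) → ℂ) :
    Qlead (N + 1) f k kinv ξ a =
      f 0 * (algebraMap ℂ R ξ * (k 0 * algebraMap ℂ R (a 0)⁻¹) * ∏ i, Fin.tail k i ^ 2
        - algebraMap ℂ R ξ⁻¹ * (algebraMap ℂ R (a 0) * kinv 0) * ∏ i, Fin.tail kinv i ^ 2)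
      + Qlead N (Fin.tail f) (Fin.tail k) (Fin.tail kinv) ξ (Fin.tail a) := by
  simp [Qlead, Fin.sum_univ_succ, Finset.prod_filter, Fin.prod_univ_succ, Fin.tail]

theorem adjugate_thatGen {N : ℕ} (e f k kinv : Fin N → R) (ξ : ℂ) (a : Fin N → ℂ)
    (u v : R[T;T⁻¹]) :
    (thatGen N e f k kinv ξ a u v).adjugate = thatGen N e f k kinv ξ a v u := by
  induction N with
  | zero => simp only [thatGen_zero, adjugate_refK]
  | succ N ih =>
    simp only [thatGen_succ, Matrix.adjugate_mul_distrib, adjugate_lax, ih, neg_mul, mul_neg,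
      neg_neg, mul_assoc]

theorem map_thatGen (φ : R[T;T⁻¹] →ₐ[R] R[T;T⁻¹]) {N : ℕ} (e f k kinv : Fin N → R) (ξ : ℂ)
    (a : Fin N → ℂ) (u v : R[T;T⁻¹]) :
    φ.mapMatrix (thatGen N e f k kinv ξ a u v) = thatGen N e f k kinv ξ a (φ u) (φ v) := by
  have hφ (x : ℂ) : φ (algebraMap ℂ R[T;T⁻¹] x) = algebraMap ℂ R[T;T⁻¹] x :=
    (φ.restrictScalars ℂ).commutes x
  induction N with
  | zero => simp only [thatGen_zero, map_refK]
  | succ N ih => simp only [thatGen_succ, map_mul, map_lax, ih, hφ]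

theorem invert_That_one_zero {N : ℕ} (e f k kinv : Fin N → R) (ξ : ℂ) (a : Fin N → ℂ) :
    invert (That N e f k kinv ξ a 1 0) = -That N e f k kinv ξ a 1 0 := by
  have h : (invert : R[T;T⁻¹] ≃ₐ[R] _).toAlgHom.mapMatrix (That N e f k kinv ξ a) =
      (That N e f k kinv ξ a).adjugate := by
    rw [That, map_thatGen, adjugate_thatGen]
    simp
  simpa [Matrix.adjugate_fin_two] using congrFun₂ h 1 0

theorem hasLeadingMatrix_That {N : ℕ} (e f k kinv : Fin N → R) (hk : ∀ i, k i * kinv i = 1)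
    (ξ : ℂ) (a : Fin N → ℂ) (ha : ∀ i, a i ≠ 0) :
    HasLeadingMatrix 2 ![0, 1] (That N e f k kinv ξ a) (2 * N + 1)
      !![algebraMap ℂ R ξ * ∏ i, k i ^ 2, 0;
        Qlead N f k kinv ξ a, -(algebraMap ℂ R ξ⁻¹ * ∏ i, kinv i ^ 2)] := by
  induction N with
  | zero => simpa [That, thatGen_zero, Qlead] using hasLeadingMatrix_refK ξ
  | succ N ih =>
    have haa : algebraMap ℂ R (a 0) * algebraMap ℂ R (a 0)⁻¹ = 1 := by
      rw [← map_mul, mul_inv_cancel₀ (ha 0), map_one]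
    have hprod (x : Fin (N + 1) → R) : ∏ i, x i ^ 2 = x 0 ^ 2 * ∏ i, Fin.tail x i ^ 2 :=
      Fin.prod_univ_succ _
    have hN := ih (Fin.tail e) (Fin.tail f) (Fin.tail k) (Fin.tail kinv) (fun i ↦ hk i.succ)
      (Fin.tail a) (fun i ↦ ha i.succ)
    have h := ((hasLeadingMatrix_lax (e 0) (f 0) (k 0) (kinv 0) (algebraMap ℂ R (a 0))
      (algebraMap ℂ R (a 0)⁻¹)).mul hN).mul (hasLeadingMatrix_lax (e 0) (f 0) (k 0) (kinv 0)
      (algebraMap ℂ R (a 0)⁻¹) (algebraMap ℂ R (a 0)))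
    simp only [← algebraMap_laurentPolynomial] at h
    rw [That, ← thatGen_succ, ← That] at h
    convert h using 1
    · push_cast
      ring
    · rw [leadingMatrix_dress haa (hk 0), Qlead_succ, hprod k, hprod kinv]
      congr! 3 <;> ring_nf

end Monodromy

/-- separation-of-variables structure of the entry `Ĉ(z)` of the reflection
monodromy matrix: there is a unique polynomial `c` of degree at most `N − 1` with
`Ĉ(z) = (z² − z⁻²)·c(z² + z⁻²)`, and its coefficient of `X^{N−1}` equals `Q`. -/
theorem separated_polynomial_C (R : Type) [CommRing R] [Algebra ℂ R]
    (N : ℕ) (hN : 1 ≤ N) (e f k kinv : Fin N → R) (hk : ∀ i, k i * kinv i = 1)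
    (ξ : ℂ) (hξ : ξ ≠ 0) (a : Fin N → ℂ) (ha : ∀ i, a i ≠ 0) :
    (∃! c : Polynomial R, c.natDegree ≤ N - 1 ∧
        That N e f k kinv ξ a 1 0
          = (T 2 - T (-2)) * Polynomial.aeval (T 2 + T (-2) : LaurentPolynomial R) c) ∧
    ∀ c : Polynomial R, (c.natDegree ≤ N - 1 ∧
        That N e f k kinv ξ a 1 0
          = (T 2 - T (-2)) * Polynomial.aeval (T 2 + T (-2) : LaurentPolynomial R) c) →
      c.coeff (N - 1) = Qlead N f k kinv ξ a := by
  have : Module ℚ R := Module.compHom R (algebraMap ℚ ℂ)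
  have : IsAddTorsionFree R := .of_module_rat R
  obtain ⟨n, rfl⟩ := Nat.exists_eq_add_of_le' hN
  have hlead : HasLeadingTerm 2 (That (n + 1) e f k kinv ξ a 1 0) (2 * (n + 1 : ℕ))
      (Qlead (n + 1) f k kinv ξ a) := by
    simpa using hasLeadingMatrix_That e f k kinv hk ξ a ha 1 0
  obtain ⟨c, hdeg, hc⟩ :=
    exists_eq_T_sub_T_neg_mul_aeval two_pos hlead (invert_That_one_zero e f k kinv ξ a)
  refine ⟨⟨c, ⟨?_, hc⟩, fun b hb ↦ ?_⟩, fun b hb ↦ ?_⟩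
  · exact Polynomial.natDegree_le_iff_coeff_eq_zero.mpr
      ((Polynomial.degree_lt_iff_coeff_zero _ _).mp hdeg)
  · exact injective_T_sub_T_neg_mul_aeval two_pos (hb.2.symm.trans hc)
  · exact HasLeadingTerm.unique two_pos (hb.2 ▸ hasLeadingTerm_T_sub_T_neg_mul_aeval hb.1) hlead

end
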